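/- arXiv:2210.07773 — 2 statements merged into one kernel-verified Lean document; each statement's English description precedes it below -/
import Mathlib

section
/- Let n ≥ k ≥ 2 be integers and let λ ∈ (0,1] satisfy λ ≥ k²/n. Let s be a λ-dispersed preference model on n items. Then for every item i ∈ {1,…,n} and every memory vector v ∈ Δ(n), the vector b_i ∈ Δ(n) defined by (b_i)_i = k/n and (b_i)_j = 1/n − (k−1)/(n(n−1)) for all j ≠ i lies in IRD(v). -/
open Finset

/-- The choice distribution induced by preference model `s` at memory vector `v`
when menu `K` is shown. -/
noncomputable def menuDist {n : ℕ} (s : (Fin n → ℝ) → Fin n → ℝ)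
    (v : Fin n → ℝ) (K : Finset (Fin n)) : Fin n → ℝ :=
  fun i => if i ∈ K then s v i / ∑ j ∈ K, s v j else 0

/-- The set of instantaneously realizable distributions at memory vector `v`. -/
noncomputable def IRD {n : ℕ} (k : ℕ) (s : (Fin n → ℝ) → Fin n → ℝ)
    (v : Fin n → ℝ) : Set (Fin n → ℝ) :=
  convexHull ℝ { p | ∃ K : Finset (Fin n), K.card = k ∧ p = menuDist s v K }

/-- Among the `k`-element subsets of a finite type there is one consisting of top elements for `w`,
separated from its complement by a threshold `t`. -/
lemma exists_card_eq_threshold {ι : Type*} [Fintype ι] (w : ι → ℝ) {k : ℕ}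
    (hk : 0 < k) (hkn : k ≤ Fintype.card ι) :
    ∃ (K : Finset ι) (t : ℝ), K.card = k ∧ (∀ j ∈ K, t ≤ w j) ∧ ∀ j ∉ K, w j ≤ t := by
  classical
  obtain ⟨K, hK, hmax⟩ := (powersetCard k (univ : Finset ι)).exists_max_image
    (fun K => ∑ j ∈ K, w j) (powersetCard_nonempty.2 (by simpa using hkn))
  have hcard : K.card = k := (mem_powersetCard.1 hK).2
  obtain ⟨a, ha, hmin⟩ := K.exists_min_image w (card_pos.1 (by omega))
  refine ⟨K, w a, hcard, hmin, fun j hj => ?_⟩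
  have hj' : j ∉ K.erase a := fun h => hj (mem_of_mem_erase h)
  have h := hmax (insert j (K.erase a)) (mem_powersetCard.2 ⟨subset_univ _, by
    rw [card_insert_of_notMem hj', card_erase_of_mem ha]; omega⟩)
  rw [sum_insert hj', ← add_sum_erase K w ha] at h
  linarith

/-- A linear functional on the scaled hypersimplex is bounded by its largest value at a vertex. -/
lemma exists_card_eq_sum_mul_le {ι : Type*} [Fintype ι] (w μ : ι → ℝ) {k : ℕ}
    (hk : 0 < k) (hkn : k ≤ Fintype.card ι) {M : ℝ} (hμ0 : ∀ j, 0 ≤ μ j)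
    (hμM : ∀ j, μ j ≤ M) (hsum : ∑ j, μ j = k * M) :
    ∃ K : Finset ι, K.card = k ∧ ∑ j, μ j * w j ≤ M * ∑ j ∈ K, w j := by
  classical
  obtain ⟨K, t, hcard, hge, hle⟩ := exists_card_eq_threshold w hk hkn
  refine ⟨K, hcard, ?_⟩
  have h : ∑ j, μ j * (w j - t) ≤ ∑ j, if j ∈ K then M * (w j - t) else 0 := by
    refine sum_le_sum fun j _ => ?_
    split_ifs with hj
    · exact mul_le_mul_of_nonneg_right (hμM j) (sub_nonneg.2 (hge j hj))
    · exact mul_nonpos_of_nonneg_of_nonpos (hμ0 j) (sub_nonpos.2 (hle j hj))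
  rw [← sum_filter, filter_mem_eq_inter, univ_inter, ← mul_sum, sum_sub_distrib, sum_const,
    hcard, nsmul_eq_mul] at h
  simp only [mul_sub] at h
  rw [sum_sub_distrib, ← sum_mul, hsum] at h
  linarith

/-- A distribution is instantaneously realizable as soon as no score-normalized entry exceeds
a `1 / k` fraction of their total. -/
lemma mem_IRD_of_mul_div_le {n k : ℕ} (hk : 0 < k) (hkn : k ≤ n)
    {s : (Fin n → ℝ) → Fin n → ℝ} {v : Fin n → ℝ} (hs : ∀ j, 0 < s v j)
    {x : Fin n → ℝ} (hx : x ∈ stdSimplex ℝ (Fin n))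
    (hle : ∀ j, k * (x j / s v j) ≤ ∑ l, x l / s v l) : x ∈ IRD k s v := by
  by_contra hnot
  have hk' : (0 : ℝ) < k := by exact_mod_cast hk
  have hfin : { p | ∃ K : Finset (Fin n), K.card = k ∧ p = menuDist s v K }.Finite :=
    (Set.finite_range (menuDist s v)).subset (by rintro _ ⟨K, -, rfl⟩; exact ⟨K, rfl⟩)
  obtain ⟨f, u, hfu, hux⟩ := geometric_hahn_banach_closed_point (convex_convexHull ℝ _)
    (hfin.isClosed_convexHull ℝ) hnot
  set c : Fin n → ℝ := fun j => f fun l => if j = l then 1 else 0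
  have hf : ∀ y : Fin n → ℝ, f y = ∑ j, y j * c j :=
    fun y => LinearMap.pi_apply_eq_sum_univ f.toLinearMap y
  obtain ⟨K, hcard, hK⟩ := exists_card_eq_sum_mul_le (fun j => s v j * (c j - u))
    (fun j => x j / s v j) hk (by simpa using hkn) (M := (∑ l, x l / s v l) / k)
    (fun j => div_nonneg (hx.1 j) (hs j).le)
    (fun j => by rw [le_div_iff₀ hk', mul_comm]; exact hle j) (by field_simp)
  have hpos : 0 < ∑ j, x j / s v j * (s v j * (c j - u)) := by
    have h : ∀ j, x j / s v j * (s v j * (c j - u)) = x j * c j - x j * u := fun j => by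
      have := (hs j).ne'
      field_simp
    rw [sum_congr rfl fun j _ => h j, sum_sub_distrib, ← sum_mul, hx.2, ← hf x]
    linarith
  have hS : 0 < ∑ j ∈ K, s v j :=
    sum_pos (fun j _ => hs j) (card_pos.1 (by omega))
  have hneg : ∑ j ∈ K, s v j * (c j - u) < 0 := by
    have h := hfu _ (subset_convexHull ℝ _ ⟨K, hcard, rfl⟩)
    have h' : f (menuDist s v K) = (∑ j ∈ K, s v j * c j) / ∑ j ∈ K, s v j := by
      rw [hf, sum_div]
      simp only [menuDist, ite_mul, zero_mul, sum_ite_mem, univ_inter]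
      exact sum_congr rfl fun j _ => by ring
    rw [h', div_lt_iff₀ hS] at h
    simp only [mul_sub]
    rw [sum_sub_distrib, ← sum_mul]
    linarith
  have hM : 0 ≤ (∑ l, x l / s v l) / k :=
    div_nonneg (sum_nonneg fun j _ => div_nonneg (hx.1 j) (hs j).le) hk'.le
  nlinarith [mul_nonpos_of_nonneg_of_nonpos hM hneg.le]

/-- For a `λ`-dispersed preference model with `λ ≥ k²/n`, the "boosted" distribution `b_i`
with `(b_i)_i = k/n` and `(b_i)_j = 1/n − (k−1)/(n(n−1))` for `j ≠ i` lies in `IRD(v)`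
for every item `i` and memory vector `v`. -/
theorem boosted_mem_IRD {n k : ℕ} (hk : 2 ≤ k) (hkn : k ≤ n)
    (lam : ℝ) (hlam0 : 0 < lam) (hlam1 : lam ≤ 1)
    (hlamn : (k : ℝ) ^ 2 / n ≤ lam)
    (s : (Fin n → ℝ) → Fin n → ℝ)
    (hdisp : ∀ v ∈ stdSimplex ℝ (Fin n), ∀ i, lam ≤ s v i ∧ s v i ≤ 1) :
    ∀ (i : Fin n), ∀ v ∈ stdSimplex ℝ (Fin n),
      (fun j : Fin n => if j = i then (k : ℝ) / n
        else 1 / n - ((k : ℝ) - 1) / (n * ((n : ℝ) - 1))) ∈ IRD k s v := by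
  intro i v hv
  have hk2 : (2 : ℝ) ≤ k := by exact_mod_cast hk
  have hkn' : (k : ℝ) ≤ n := by exact_mod_cast hkn
  have hn : (0 : ℝ) < n := by linarith
  have hn1 : (0 : ℝ) < (n : ℝ) - 1 := by linarith
  have hs : ∀ j, 0 < s v j := fun j => hlam0.trans_le (hdisp v hv j).1
  have hoff : (1 : ℝ) / n - ((k : ℝ) - 1) / (n * ((n : ℝ) - 1)) = (n - k) / (n * (n - 1)) := by
    field_simp
    ring
  simp only [hoff]
  have hoff0 : (0 : ℝ) ≤ (n - k) / (n * (n - 1)) :=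
    div_nonneg (by linarith) (mul_pos hn hn1).le
  have hx : (fun j : Fin n => if j = i then (k : ℝ) / n else (n - k) / (n * (n - 1)))
      ∈ stdSimplex ℝ (Fin n) := by
    refine ⟨fun j => ?_, ?_⟩
    · dsimp only
      split_ifs
      · positivity
      · exact hoff0
    · rw [← add_sum_erase _ _ (mem_univ i), if_pos rfl,
        sum_congr rfl fun j hj => if_neg (ne_of_mem_erase hj), sum_const,
        card_erase_of_mem (mem_univ i), card_univ, Fintype.card_fin, nsmul_eq_mul,
        Nat.cast_sub (by omega), Nat.cast_one]
      field_simp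
      ring
  refine mem_IRD_of_mul_div_le (by omega) hkn hs hx fun j => ?_
  set x : Fin n → ℝ := fun j => if j = i then (k : ℝ) / n else (n - k) / (n * (n - 1)) with hxdef
  have hxle : x j ≤ k / n := by
    simp only [hxdef]
    split_ifs
    · exact le_rfl
    · rw [div_le_div_iff₀ (mul_pos hn hn1) hn]
      nlinarith [mul_nonneg hn.le (mul_nonneg hn.le (by linarith : (0 : ℝ) ≤ k - 1))]
  calc k * (x j / s v j) ≤ 1 := by
        rw [← mul_div_assoc, div_le_one (hs j)]
        calc k * x j ≤ k * (k / n) := by gcongr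
          _ = (k : ℝ) ^ 2 / n := by ring
          _ ≤ s v j := hlamn.trans (hdisp v hv j).1
    _ = ∑ l, x l := hx.2.symm
    _ ≤ ∑ l, x l / s v l :=
        sum_le_sum fun l _ => le_div_self (hx.1 l) (hs l) (hdisp v hv l).2
end

section
/- Let n ≥ 2 and let d ≥ 2 be an even integer. Let Z > 0 satisfy 1/n − d/(2Z) ≥ 0 and 1/n + d/(2Z) ≤ 1, and consider the d+1 distinct nodes x_0 = 1/n and x_{±j} = 1/n ± j/Z for j = 1, …, d/2. Let p and q be real polynomials of degree at most d, and let η ≥ 0 be such that |p(x_j) − q(x_j)| ≤ η at every node x_j. Then for every x ∈ [0,1], |p(x) − q(x)| ≤ (d+1) · η · Z^d / ((d/2)!)². -/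
open Finset

/-- The product of the distances from `a` to the other points of `{0, …, a + b}`. -/
theorem prod_abs_sub_erase_range (a b : ℕ) :
    ∏ k ∈ (range (a + b + 1)).erase a, |(a : ℝ) - k| = (a.factorial : ℝ) * b.factorial := by
  induction b with
  | zero =>
    rw [add_zero, range_add_one, erase_insert notMem_range_self, ← prod_range_reflect,
      ← prod_range_add_one_eq_factorial]
    push_cast
    simp only [Nat.factorial_zero, Nat.cast_one, mul_one]
    refine prod_congr rfl fun k hk => ?_
    have hk : k + 1 ≤ a := mem_range.mp hk
    rw [Nat.sub_sub, add_comm 1 k, Nat.cast_sub hk]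
    push_cast
    rw [show (a : ℝ) - (a - (k + 1)) = k + 1 by ring, abs_of_nonneg (by positivity)]
  | succ b ih =>
    rw [← add_assoc, range_add_one, erase_insert_of_ne (by omega), prod_insert (by simp), ih,
      Nat.factorial_succ]
    push_cast
    rw [show (a : ℝ) - (a + b + 1) = -(b + 1) by ring, abs_neg, abs_of_nonneg (by positivity)]
    ring

theorem factorial_sq_le_factorial_mul_factorial {a b m : ℕ} (h : a + b = 2 * m) :
    m.factorial ^ 2 ≤ a.factorial * b.factorial := by
  have ha := Nat.choose_mul_factorial_mul_factorial (show a ≤ 2 * m by omega)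
  have hm := Nat.choose_mul_factorial_mul_factorial (show m ≤ 2 * m by omega)
  have hle : (2 * m).choose a ≤ (2 * m).choose m := Nat.choose_le_centralBinom a m
  rw [show 2 * m - a = b by omega] at ha
  rw [show 2 * m - m = m by omega] at hm
  have hpos : 0 < (2 * m).choose m := Nat.choose_pos (by omega)
  refine Nat.le_of_mul_le_mul_left ?_ hpos
  calc (2 * m).choose m * m.factorial ^ 2 = (2 * m).choose a * (a.factorial * b.factorial) := by
        rw [sq, ← mul_assoc, hm, ← mul_assoc, ha]
    _ ≤ _ := Nat.mul_le_mul_right _ hle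

/-- A bound for the Lagrange basis polynomials on `2 * m + 1` equispaced nodes with gap `1 / Z`,
at a point within distance `1` of every node. -/
theorem abs_eval_lagrange_basis_le {m i : ℕ} (hi : i ∈ range (2 * m + 1)) {c Z x : ℝ} (hZ : 0 < Z)
    {v : ℕ → ℝ} (hv : ∀ k, v k = c + (k : ℝ) / Z)
    (hx : ∀ k ∈ range (2 * m + 1), |x - v k| ≤ 1) :
    |(Lagrange.basis (range (2 * m + 1)) v i).eval x|
      ≤ Z ^ (2 * m) / (m.factorial : ℝ) ^ 2 := by
  obtain ⟨b, hb⟩ : ∃ b, i + b = 2 * m := ⟨2 * m - i, by have := mem_range.mp hi; omega⟩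
  have hfac : (m.factorial : ℝ) ^ 2 ≤ i.factorial * b.factorial := by
    exact_mod_cast factorial_sq_le_factorial_mul_factorial hb
  calc |(Lagrange.basis (range (2 * m + 1)) v i).eval x|
      = ∏ k ∈ (range (2 * m + 1)).erase i, |x - v k| * (Z / |(i : ℝ) - k|) := by
        rw [Lagrange.basis, Polynomial.eval_prod, abs_prod]
        refine prod_congr rfl fun k _ => ?_
        have hsub : v i - v k = ((i : ℝ) - k) / Z := by rw [hv, hv]; ring
        simp [Lagrange.basisDivisor, abs_mul, hsub, abs_div, abs_of_pos hZ, mul_comm]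
    _ ≤ ∏ k ∈ (range (2 * m + 1)).erase i, Z / |(i : ℝ) - k| :=
        prod_le_prod (fun _ _ => by positivity) fun k hk =>
          mul_le_of_le_one_left (by positivity) (hx k (mem_of_mem_erase hk))
    _ = Z ^ (2 * m) / (i.factorial * b.factorial) := by
        rw [prod_div_distrib, prod_const, card_erase_of_mem hi, card_range, ← hb,
          prod_abs_sub_erase_range, Nat.add_sub_cancel]
    _ ≤ Z ^ (2 * m) / (m.factorial : ℝ) ^ 2 := by gcongr

/-- Error propagation through Lagrange interpolation: if two polynomials of degree at most
`d` disagree by at most `η` at each of the `d+1` nodes `1/n + j/Z`, `j = −d/2, …, d/2`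
(with `d` even, nodes in `[0,1]`), then they disagree by at most
`(d+1)·η·Z^d/((d/2)!)²` everywhere on `[0,1]`. -/
theorem lagrange_error_propagation (n d : ℕ) (hn : 2 ≤ n) (hd : 2 ≤ d) (hdeven : Even d)
    (Z : ℝ) (hZ : 0 < Z)
    (hlow : 0 ≤ 1 / (n : ℝ) - (d : ℝ) / (2 * Z))
    (hhigh : 1 / (n : ℝ) + (d : ℝ) / (2 * Z) ≤ 1)
    (node : ℤ → ℝ) (hnode : ∀ j : ℤ, node j = 1 / (n : ℝ) + (j : ℝ) / Z)
    (p q : Polynomial ℝ) (hp : p.natDegree ≤ d) (hq : q.natDegree ≤ d)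
    (η : ℝ) (hη : 0 ≤ η)
    (hnodes : ∀ j ∈ Finset.Icc (-((d : ℤ) / 2)) ((d : ℤ) / 2),
      |p.eval (node j) - q.eval (node j)| ≤ η) :
    ∀ x ∈ Set.Icc (0 : ℝ) 1,
      |p.eval x - q.eval x|
        ≤ ((d : ℝ) + 1) * η * Z ^ d / ((Nat.factorial (d / 2) : ℝ)) ^ 2 := by
  intro x hx
  obtain ⟨m, hm⟩ := hdeven
  obtain rfl : d = 2 * m := by omega
  have hdiv : 2 * m / 2 = m := by omega
  rw [hdiv]
  set v : ℕ → ℝ := fun k => node ((k : ℤ) - m) with hv_def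
  have hv : ∀ k, v k = (1 / (n : ℝ) - m / Z) + (k : ℝ) / Z := fun k => by
    simp only [hv_def, hnode]
    push_cast
    ring
  have hinj : Function.Injective v := fun a b hab => by
    rw [hv, hv, add_right_inj, div_left_inj' hZ.ne'] at hab
    exact_mod_cast hab
  have hhalf : ((2 * m : ℕ) : ℝ) / (2 * Z) = m / Z := by
    push_cast
    exact mul_div_mul_left _ _ two_ne_zero
  rw [hhalf] at hlow hhigh
  have hdist : ∀ k ∈ range (2 * m + 1), |x - v k| ≤ 1 := fun k hk => by
    have hk : (k : ℝ) ≤ 2 * m := by exact_mod_cast Nat.lt_succ_iff.mp (mem_range.mp hk)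
    have h0 : 0 ≤ (k : ℝ) / Z := by positivity
    have h1 : (k : ℝ) / Z ≤ 2 * (m / Z) := by
      rw [← mul_div_assoc]
      gcongr
    rw [hv, abs_le]
    constructor <;> linarith [hx.1, hx.2]
  have hdeg : (p - q).degree < #(range (2 * m + 1)) := by
    rw [card_range]
    exact Polynomial.degree_le_natDegree.trans_lt (by
      exact_mod_cast Nat.lt_succ_of_le (Polynomial.natDegree_sub_le_of_le hp hq |>.trans_eq
        (max_self _)))
  rw [← Polynomial.eval_sub, Lagrange.eq_interpolate hinj.injOn hdeg, Lagrange.interpolate_apply,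
    Polynomial.eval_finsetSum]
  calc _ ≤ ∑ i ∈ range (2 * m + 1), η * (Z ^ (2 * m) / (m.factorial : ℝ) ^ 2) := by
        refine (abs_sum_le_sum_abs _ _).trans (sum_le_sum fun i hi => ?_)
        rw [Polynomial.eval_mul, Polynomial.eval_C, Polynomial.eval_sub, abs_mul]
        refine mul_le_mul (hnodes _ ?_) (abs_eval_lagrange_basis_le hi hZ hv hdist)
          (abs_nonneg _) hη
        have := mem_range.mp hi
        rw [mem_Icc]
        push_cast
        omega
    _ = _ := by
        rw [sum_const, card_range, nsmul_eq_mul]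
        push_cast
        ring
end
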